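/- Modified Laplace transform of the Caputo–Hadamard derivative: for 0 < α < 1 and f sufficiently smooth with suitable decay, L{_{CH}D_a^α f}(z) = z^α L{f}(z) − z^{α−1} f(a). -/

import Mathlib

open MeasureTheory

lemma aux_rpow_int (s b : ℝ) (hs : -1 < s) (hb : 0 < b) :
    IntegrableOn (fun x : ℝ => x ^ s * Real.exp (-b * x)) (Set.Ioi 0) := by
  simpa using integrableOn_rpow_mul_exp_neg_mul_rpow (p := 1) hs one_pos hb

lemma aux_meas (s : ℝ) (w : ℂ) :
    AEStronglyMeasurable (fun x : ℝ => Complex.exp (-w * x) * ((x ^ s : ℝ) : ℂ))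
      (volume.restrict (Set.Ioi 0)) := by
  apply Measurable.aestronglyMeasurable
  fun_prop

lemma aux_kint (s : ℝ) (hs : -1 < s) (w : ℂ) (hw : 0 < w.re) :
    IntegrableOn (fun x : ℝ => Complex.exp (-w * x) * ((x ^ s : ℝ) : ℂ)) (Set.Ioi 0) := by
  refine Integrable.mono' (aux_rpow_int s w.re hs hw) (aux_meas s w) ?_
  refine (ae_restrict_iff' measurableSet_Ioi).mpr (ae_of_all _ fun x hx => ?_)
  have hx : (0:ℝ) < x := hx
  rw [norm_mul, Complex.norm_exp, Complex.norm_real, Real.norm_of_nonneg (by positivity), mul_comm]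
  simp

lemma aux_diff (s : ℝ) (hs : -1 < s) (z : ℂ) (hz : 0 < z.re) :
    DifferentiableAt ℂ (fun w : ℂ => ∫ x : ℝ in Set.Ioi 0,
      Complex.exp (-w * x) * ((x ^ s : ℝ) : ℂ)) z := by
  have hS : {w : ℂ | z.re / 2 < w.re} ∈ nhds z :=
    (isOpen_lt continuous_const Complex.continuous_re).mem_nhds (by simp; linarith)
  have := hasDerivAt_integral_of_dominated_loc_of_deriv_le (𝕜 := ℂ)
    (μ := volume.restrict (Set.Ioi (0:ℝ)))
    (F := fun (w : ℂ) (x : ℝ) => Complex.exp (-w * x) * ((x ^ s : ℝ) : ℂ))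
    (F' := fun (w : ℂ) (x : ℝ) => Complex.exp (-w * x) * (-x) * ((x ^ s : ℝ) : ℂ))
    (bound := fun x : ℝ => x ^ (s + 1) * Real.exp (-(z.re / 2) * x)) hS
    (Filter.Eventually.of_forall fun w => aux_meas s w)
    (aux_kint s hs z hz)
    (by apply Measurable.aestronglyMeasurable; fun_prop)
    ?_ (aux_rpow_int (s + 1) (z.re / 2) (by linarith) (by linarith)) ?_
  · exact this.2.differentiableAt
  · refine (ae_restrict_iff' measurableSet_Ioi).mpr (ae_of_all _ fun x hx w hw => ?_)
    have hx : (0:ℝ) < x := hx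
    have hw : z.re / 2 < w.re := hw
    rw [norm_mul, norm_mul, Complex.norm_exp, Complex.norm_real, norm_neg, Complex.norm_real,
      Real.norm_of_nonneg (by positivity), Real.norm_of_nonneg (by positivity),
      Real.rpow_add_one hx.ne']
    have : Real.exp ((-w * x : ℂ).re) ≤ Real.exp (-(z.re / 2) * x) := by
      apply Real.exp_le_exp.mpr
      simp
      nlinarith
    calc _ = x ^ s * x * Real.exp ((-w * x : ℂ).re) := by ring
      _ ≤ _ := by gcongr
  · refine ae_of_all _ fun x w _ => ?_
    have h1 : HasDerivAt (fun w : ℂ => -w * (x:ℂ)) (-x) w := by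
      simpa using ((hasDerivAt_id w).neg).mul_const (x:ℂ)
    exact h1.cexp.mul_const _

lemma aux_gamma (α : ℝ) (hα1 : α < 1) (z : ℂ) (hz : 0 < z.re) :
    ∫ x : ℝ in Set.Ioi 0, Complex.exp (-z * x) * ((x ^ (-α) : ℝ) : ℂ)
      = z ^ ((α : ℂ) - 1) * (Real.Gamma (1 - α) : ℂ) := by
  set U : Set ℂ := {w : ℂ | 0 < w.re} with hU
  have hUo : IsOpen U := isOpen_lt continuous_const Complex.continuous_re
  have hA : AnalyticOnNhd ℂ (fun w : ℂ => ∫ x : ℝ in Set.Ioi 0,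
      Complex.exp (-w * x) * ((x ^ (-α) : ℝ) : ℂ)) U :=
    DifferentiableOn.analyticOnNhd
      (fun w hw => (aux_diff (-α) (by linarith) w hw).differentiableWithinAt) hUo
  have hB : AnalyticOnNhd ℂ (fun w : ℂ => w ^ ((α : ℂ) - 1) * (Real.Gamma (1 - α) : ℂ)) U := by
    refine DifferentiableOn.analyticOnNhd (fun w hw => ?_) hUo
    refine DifferentiableAt.differentiableWithinAt ?_
    refine DifferentiableAt.mul_const ?_ _
    exact differentiableAt_id.cpow_const (Or.inl hw)
  have hC : IsPreconnected U := (convex_halfSpace_re_gt 0).isPreconnected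
  refine hA.eqOn_of_preconnected_of_frequently_eq hB hC (z₀ := 1) (by simp [hU]) ?_ hz
  have hreal : ∀ r : ℝ, 0 < r → (∫ x : ℝ in Set.Ioi 0,
      Complex.exp (-(r:ℂ) * x) * ((x ^ (-α) : ℝ) : ℂ))
        = (r:ℂ) ^ ((α : ℂ) - 1) * (Real.Gamma (1 - α) : ℂ) := by
    intro r hr
    have h := Real.integral_rpow_mul_exp_neg_mul_Ioi (a := 1 - α) (r := r) (by linarith) hr
    rw [one_div, Real.inv_rpow hr.le, ← Real.rpow_neg hr.le] at h
    have h2 := congrArg (fun t : ℝ => (t : ℂ)) h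
    rw [← integral_complex_ofReal] at h2
    rw [Complex.ofReal_mul, Complex.ofReal_cpow hr.le] at h2
    convert! h2 using 2
    · ext x
      push_cast
      rw [mul_comm]
      ring_nf
    · push_cast
      ring_nf
  have ht : Filter.Tendsto (fun r : ℝ => (r : ℂ)) (nhdsWithin 1 {1}ᶜ) (nhdsWithin 1 {1}ᶜ) := by
    refine tendsto_nhdsWithin_iff.mpr ⟨?_, ?_⟩
    · exact (Complex.continuous_ofReal.tendsto' 1 1 (by simp)).mono_left nhdsWithin_le_nhds
    · filter_upwards [self_mem_nhdsWithin] with r hr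
      simpa using hr
  refine ht.frequently (Filter.Eventually.frequently ?_)
  filter_upwards [nhdsWithin_le_nhds (lt_mem_nhds (zero_lt_one (α := ℝ)))] with r hr
  exact hreal r hr

/-- local identity -/
lemma aux_local (α : ℝ) (hα1 : α < 1) (g h : ℝ → ℝ) (hg : ∀ x, 0 ≤ x → HasDerivAt g (h x) x)
    (hh : Continuous h) (x : ℝ) (hx : 0 < x) :
    ∫ u in (0:ℝ)..x, (∫ y in (0:ℝ)..u, (u - y) ^ (-α) * h y)
      = ∫ t in (0:ℝ)..x, (g t - g 0) * (x - t) ^ (-α) := by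
  have hk : IntegrableOn (fun v : ℝ => v ^ (-α)) (Set.Ioc 0 x) :=
    (intervalIntegrable_iff_integrableOn_Ioc_of_le hx.le).mp
      (intervalIntegral.intervalIntegrable_rpow' (by linarith))
  obtain ⟨C, hC⟩ := (isCompact_Icc (a := -x) (b := x)).exists_bound_of_continuousOn hh.continuousOn
  have hprod : Integrable (Function.uncurry fun u v : ℝ =>
      v ^ (-α) * (if v ≤ u then h (u - v) else 0))
      ((volume.restrict (Set.Ioc 0 x)).prod (volume.restrict (Set.Ioc 0 x))) := by
    have h1 : Integrable (fun p : ℝ × ℝ => p.2 ^ (-α))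
      ((volume.restrict (Set.Ioc 0 x)).prod (volume.restrict (Set.Ioc 0 x))) := hk.comp_snd _
    refine h1.mul_bdd (c := C) (g := fun p : ℝ × ℝ => if p.2 ≤ p.1 then h (p.1 - p.2) else 0) ?_ ?_
    · apply Measurable.aestronglyMeasurable
      refine Measurable.ite (measurableSet_le measurable_snd measurable_fst) ?_ measurable_const
      exact hh.measurable.comp (measurable_fst.sub measurable_snd)
    · rw [Measure.prod_restrict]
      refine (ae_restrict_iff' (measurableSet_Ioc.prod measurableSet_Ioc)).mpr
        (ae_of_all _ fun p hp => ?_)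
      obtain ⟨⟨h1, h2⟩, h3, h4⟩ := hp
      have hb := hC (p.1 - p.2) ⟨by linarith, by linarith⟩
      split_ifs
      · exact hb
      · simpa using (norm_nonneg _).trans hb
  have hswap := integral_integral_swap hprod
  have hL : ∀ u ∈ Set.Ioc 0 x, (∫ y in (0:ℝ)..u, (u - y) ^ (-α) * h y)
      = ∫ v in Set.Ioc 0 x, v ^ (-α) * (if v ≤ u then h (u - v) else 0) := by
    intro u hu
    have e1 := intervalIntegral.integral_comp_sub_left (a := 0) (b := u)
      (fun v => v ^ (-α) * h (u - v)) u
    simp only [sub_sub_cancel, sub_self, sub_zero] at e1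
    rw [e1, intervalIntegral.integral_of_le hu.1.le]
    have : Set.Ioc 0 u = Set.Ioc 0 x ∩ Set.Iic u := by
      ext v; simp only [Set.mem_Ioc, Set.mem_inter_iff, Set.mem_Iic]
      constructor
      · rintro ⟨p, q⟩; exact ⟨⟨p, q.trans hu.2⟩, q⟩
      · rintro ⟨⟨p, q⟩, r⟩; exact ⟨p, r⟩
    rw [this, ← Measure.restrict_restrict_of_subset (s := Set.Ioc 0 x ∩ Set.Iic u) (t := Set.Ioc 0 x)
      Set.inter_subset_left, ← this]
    rw [← integral_indicator measurableSet_Ioc]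
    refine setIntegral_congr_fun measurableSet_Ioc fun v hv => ?_
    by_cases hvu : v ≤ u
    · simp [Set.indicator, hvu, hv.1]
    · simp [Set.indicator, hvu]
  have hR : ∀ v ∈ Set.Ioc 0 x, (∫ u in Set.Ioc 0 x, v ^ (-α) * (if v ≤ u then h (u - v) else 0))
      = v ^ (-α) * (g (x - v) - g 0) := by
    intro v hv
    rw [integral_const_mul]
    congr 1
    have e1 := intervalIntegral.integral_eq_sub_of_hasDerivAt (f := g) (f' := h) (a := 0) (b := x - v)
      (fun y hy => hg y (by rw [Set.uIcc_of_le (by linarith [hv.2])] at hy; exact hy.1))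
      (hh.intervalIntegrable _ _)
    rw [← e1]
    have e2 := intervalIntegral.integral_comp_sub_right (a := v) (b := x) h v
    rw [sub_self] at e2
    rw [← e2, intervalIntegral.integral_of_le hv.2, ← integral_Icc_eq_integral_Ioc (x := v)]
    have : Set.Icc v x ⊆ Set.Ioc 0 x := fun y hy => ⟨hv.1.trans_le hy.1, hy.2⟩
    rw [← Measure.restrict_restrict_of_subset this, ← integral_indicator measurableSet_Icc]
    refine setIntegral_congr_fun measurableSet_Ioc fun u hu => ?_
    by_cases hvu : v ≤ u
    · simp [Set.indicator, hvu, hu.2]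
    · simp [Set.indicator, hvu]
  have e3 := intervalIntegral.integral_comp_sub_left (a := 0) (b := x)
      (fun t => (g t - g 0) * (x - t) ^ (-α)) x
  simp only [sub_sub_cancel, sub_self, sub_zero] at e3
  rw [← e3, intervalIntegral.integral_of_le hx.le, intervalIntegral.integral_of_le hx.le,
    setIntegral_congr_fun measurableSet_Ioc hL, hswap, setIntegral_congr_fun measurableSet_Ioc hR]
  simp_rw [mul_comm]

lemma aux_core (α : ℝ) (hα1 : α < 1) (g h : ℝ → ℝ)
    (hg : ∀ x, 0 ≤ x → HasDerivAt g (h x) x) (hh : Continuous h) (z : ℂ) (hz : 0 < z.re)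
    (h1 : IntegrableOn (fun x : ℝ => Complex.exp (-z * x) *
      ((∫ y in (0:ℝ)..x, (x - y) ^ (-α) * h y : ℝ) : ℂ)) (Set.Ioi 0))
    (h2 : IntegrableOn (fun x : ℝ => Complex.exp (-z * x) * (g x : ℂ)) (Set.Ioi 0)) :
    ∫ x : ℝ in Set.Ioi 0, Complex.exp (-z * x) *
      ((∫ y in (0:ℝ)..x, (x - y) ^ (-α) * h y : ℝ) : ℂ)
    = (Real.Gamma (1 - α) : ℂ) * (z ^ (α : ℂ) *
      (∫ x : ℝ in Set.Ioi 0, Complex.exp (-z * x) * (g x : ℂ)) - z ^ ((α : ℂ) - 1) * (g 0 : ℂ)) := by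
  have hz0 : z ≠ 0 := by rintro rfl; simp at hz
  have hE : IntegrableOn (fun x : ℝ => Complex.exp (-z * x)) (Set.Ioi 0) :=
    integrableOn_exp_mul_complex_Ioi (by simpa using hz) 0
  have hEv : ∫ x : ℝ in Set.Ioi 0, Complex.exp (-z * x) = 1 / z := by
    rw [integral_exp_mul_complex_Ioi (by simpa using hz) 0]; simp
  have h3 : IntegrableOn (fun x : ℝ => Complex.exp (-z * x) * ((g x - g 0 : ℝ) : ℂ))
      (Set.Ioi 0) := by
    refine (h2.sub (hE.mul_const (g 0 : ℂ))).congr (ae_of_all _ fun x => ?_)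
    simp [mul_sub]
  have h3v : ∫ x : ℝ in Set.Ioi 0, Complex.exp (-z * x) * ((g x - g 0 : ℝ) : ℂ)
      = (∫ x : ℝ in Set.Ioi 0, Complex.exp (-z * x) * (g x : ℂ)) - 1 / z * (g 0 : ℂ) := by
    rw [← hEv, ← integral_mul_const, ← integral_sub h2 (hE.mul_const (g 0 : ℂ))]
    simp [mul_sub]
  have hK := aux_kint (-α) (by linarith) z hz
  have A := integral_posConvolution h1 hE (ContinuousLinearMap.mul ℝ ℂ)
  have B := integral_posConvolution h3 hK (ContinuousLinearMap.mul ℝ ℂ)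
  simp only [ContinuousLinearMap.mul_apply'] at A B
  have AB : ∀ x ∈ Set.Ioi (0:ℝ), (∫ t in (0:ℝ)..x, (Complex.exp (-z * t) *
      ((∫ y in (0:ℝ)..t, (t - y) ^ (-α) * h y : ℝ) : ℂ)) * Complex.exp (-z * (x - t : ℝ)))
      = ∫ t in (0:ℝ)..x, (Complex.exp (-z * t) * ((g t - g 0 : ℝ) : ℂ)) *
        (Complex.exp (-z * (x - t : ℝ)) * (((x - t) ^ (-α) : ℝ) : ℂ)) := by
    intro x hx
    have hl := aux_local α hα1 g h hg hh x hx
    have hexp : ∀ t : ℝ, Complex.exp (-z * t) * Complex.exp (-z * (x - t : ℝ))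
        = Complex.exp (-z * x) := by
      intro t; rw [← Complex.exp_add]; congr 1; push_cast; ring
    have l1 : ∀ t : ℝ, (Complex.exp (-z * t) *
      ((∫ y in (0:ℝ)..t, (t - y) ^ (-α) * h y : ℝ) : ℂ)) * Complex.exp (-z * (x - t : ℝ))
      = Complex.exp (-z * x) * ((∫ y in (0:ℝ)..t, (t - y) ^ (-α) * h y : ℝ) : ℂ) := by
      intro t; rw [← hexp t]; ring
    have l2 : ∀ t : ℝ, (Complex.exp (-z * t) * ((g t - g 0 : ℝ) : ℂ)) *
        (Complex.exp (-z * (x - t : ℝ)) * (((x - t) ^ (-α) : ℝ) : ℂ))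
      = Complex.exp (-z * x) * (((g t - g 0) * (x - t) ^ (-α) : ℝ) : ℂ) := by
      intro t; rw [← hexp t, Complex.ofReal_mul]; ring
    simp_rw [l1, l2]
    rw [intervalIntegral.integral_const_mul, intervalIntegral.integral_const_mul,
      intervalIntegral.integral_ofReal, intervalIntegral.integral_ofReal, hl]
  rw [setIntegral_congr_fun measurableSet_Ioi AB, B, h3v, hEv, aux_gamma α hα1 z hz] at A
  have hp : z ^ (α : ℂ) = z ^ ((α : ℂ) - 1) * z := by
    rw [Complex.cpow_sub _ _ hz0, Complex.cpow_one]; field_simp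
  rw [hp]
  generalize (∫ x : ℝ in Set.Ioi 0, Complex.exp (-z * x) *
      ((∫ y in (0:ℝ)..x, (x - y) ^ (-α) * h y : ℝ) : ℂ)) = I at *
  field_simp at A
  rw [← A]
  ring

lemma aux_image_Ioi (a : ℝ) (ha : 0 < a) :
    (fun x : ℝ => a * Real.exp x) '' Set.Ioi 0 = Set.Ioi a := by
  ext t
  simp only [Set.mem_image, Set.mem_Ioi]
  constructor
  · rintro ⟨x, hx, rfl⟩
    have := Real.one_lt_exp_iff.mpr hx
    nlinarith
  · intro ht
    have h1 : 1 < t / a := by rwa [one_lt_div ha]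
    refine ⟨Real.log (t / a), Real.log_pos h1, ?_⟩
    rw [Real.exp_log (by linarith)]; field_simp

lemma aux_image_Ioc (a : ℝ) (ha : 0 < a) (x : ℝ) :
    (fun x : ℝ => a * Real.exp x) '' Set.Ioc 0 x = Set.Ioc a (a * Real.exp x) := by
  ext t
  simp only [Set.mem_image, Set.mem_Ioc]
  constructor
  · rintro ⟨y, ⟨hy, hyx⟩, rfl⟩
    have := Real.one_lt_exp_iff.mpr hy
    exact ⟨by nlinarith, by gcongr⟩
  · rintro ⟨ht, htx⟩
    have h1 : 1 < t / a := by rwa [one_lt_div ha]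
    refine ⟨Real.log (t / a), ⟨Real.log_pos h1, ?_⟩, ?_⟩
    · rw [Real.log_le_iff_le_exp (by linarith), div_le_iff₀ ha]; linarith
    · rw [Real.exp_log (by linarith)]; field_simp

lemma aux_deriv (a x : ℝ) :
    HasDerivAt (fun x : ℝ => a * Real.exp x) (a * Real.exp x) x :=
  (Real.hasDerivAt_exp x).const_mul a

lemma aux_inj (a : ℝ) (ha : 0 < a) (s : Set ℝ) :
    Set.InjOn (fun x : ℝ => a * Real.exp x) s := by
  intro x _ y _ hxy
  exact Real.exp_injective (mul_left_cancel₀ ha.ne' hxy)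

lemma aux_inner (a : ℝ) (ha : 0 < a) (α : ℝ) (f' : ℝ → ℝ) (x : ℝ) (hx : 0 < x) :
    ∫ s in a..(a * Real.exp x), Real.log (a * Real.exp x / s) ^ (-α) * (s * f' s) / s
      = ∫ y in (0:ℝ)..x, (x - y) ^ (-α) * (a * Real.exp y * f' (a * Real.exp y)) := by
  have hle : a ≤ a * Real.exp x := by
    have := Real.one_lt_exp_iff.mpr hx
    nlinarith
  rw [intervalIntegral.integral_of_le hle, intervalIntegral.integral_of_le hx.le,
    ← aux_image_Ioc a ha x, integral_image_eq_integral_abs_deriv_smul measurableSet_Ioc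
      (fun y _ => (aux_deriv a y).hasDerivWithinAt) (aux_inj a ha _)]
  refine setIntegral_congr_fun measurableSet_Ioc fun y _ => ?_
  have hp : 0 < a * Real.exp y := by positivity
  have : a * Real.exp x / (a * Real.exp y) = Real.exp (x - y) := by
    rw [Real.exp_sub]; field_simp
  simp only [smul_eq_mul]
  rw [this, Real.log_exp, abs_of_pos hp]
  field_simp

lemma aux_outer (a : ℝ) (ha : 0 < a) (z : ℂ) (F : ℝ → ℝ) :
    (IntegrableOn (fun t => Complex.exp (-z * (Real.log (t / a) : ℂ)) * (F t : ℂ) / (t : ℂ))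
      (Set.Ioi a) ↔ IntegrableOn (fun x : ℝ => Complex.exp (-z * x) *
        (F (a * Real.exp x) : ℂ)) (Set.Ioi 0)) ∧
    ∫ t in Set.Ioi a, Complex.exp (-z * (Real.log (t / a) : ℂ)) * (F t : ℂ) / (t : ℂ)
      = ∫ x : ℝ in Set.Ioi 0, Complex.exp (-z * x) * (F (a * Real.exp x) : ℂ) := by
  have key : ∀ x : ℝ, |a * Real.exp x| • (Complex.exp (-z *
      (Real.log (a * Real.exp x / a) : ℂ)) * (F (a * Real.exp x) : ℂ) / ((a * Real.exp x : ℝ) : ℂ))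
      = Complex.exp (-z * x) * (F (a * Real.exp x) : ℂ) := by
    intro x
    have hp : 0 < a * Real.exp x := by positivity
    have hc : ((a * Real.exp x : ℝ) : ℂ) ≠ 0 := by exact_mod_cast hp.ne'
    rw [abs_of_pos hp, mul_div_cancel_left₀ _ ha.ne', Real.log_exp, Complex.real_smul]
    field_simp
  rw [← aux_image_Ioi a ha]
  constructor
  · rw [integrableOn_image_iff_integrableOn_abs_deriv_smul measurableSet_Ioi
      (fun y _ => (aux_deriv a y).hasDerivWithinAt) (aux_inj a ha _)]
    simp_rw [key]
  · rw [integral_image_eq_integral_abs_deriv_smul measurableSet_Ioi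
      (fun y _ => (aux_deriv a y).hasDerivWithinAt) (aux_inj a ha _)]
    simp_rw [key]


/-- Modified Laplace transform of the Caputo–Hadamard derivative: for
`0 < α < 1` and `f` sufficiently smooth with suitable decay (encoded via
differentiability and integrability hypotheses),
`L{_{CH}D_a^α f}(z) = z^α L{f}(z) − z^{α−1} f(a)`. -/
theorem modifiedLaplace_caputoHadamard
    (a α : ℝ) (ha : 0 < a) (hα0 : 0 < α) (hα1 : α < 1)
    (f f' : ℝ → ℝ)
    (hderiv : ∀ t, a ≤ t → HasDerivAt f (f' t) t) (hf' : Continuous f')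
    (z : ℂ) (hz : 0 < z.re)
    (hint1 : Integrable (fun t =>
        Complex.exp (-z * (Real.log (t / a) : ℂ)) *
          (((1 / Real.Gamma (1 - α)) *
            ∫ s in a..t, Real.log (t / s) ^ (-α) * (s * f' s) / s : ℝ) : ℂ) / (t : ℂ))
      (volume.restrict (Set.Ioi a)))
    (hint2 : Integrable (fun t =>
        Complex.exp (-z * (Real.log (t / a) : ℂ)) * (f t : ℂ) / (t : ℂ))
      (volume.restrict (Set.Ioi a))) :
    ∫ t in Set.Ioi a,
        Complex.exp (-z * (Real.log (t / a) : ℂ)) *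
          (((1 / Real.Gamma (1 - α)) *
            ∫ s in a..t, Real.log (t / s) ^ (-α) * (s * f' s) / s : ℝ) : ℂ) / (t : ℂ) =
      z ^ (α : ℂ) *
          (∫ t in Set.Ioi a,
            Complex.exp (-z * (Real.log (t / a) : ℂ)) * (f t : ℂ) / (t : ℂ))
        - z ^ ((α : ℂ) - 1) * (f a : ℂ) := by
  have hΓ : (Real.Gamma (1 - α) : ℂ) ≠ 0 := by
    exact_mod_cast (Real.Gamma_pos_of_pos (by linarith)).ne'
  have o1 := aux_outer a ha z (fun t => (1 / Real.Gamma (1 - α)) *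
            ∫ s in a..t, Real.log (t / s) ^ (-α) * (s * f' s) / s)
  have o2 := aux_outer a ha z f
  have i1 := o1.1.mp hint1
  have i2 := o2.1.mp hint2
  have hcongr : Set.EqOn (fun x : ℝ => Complex.exp (-z * x) *
      (((1 / Real.Gamma (1 - α)) * ∫ s in a..(a * Real.exp x),
        Real.log (a * Real.exp x / s) ^ (-α) * (s * f' s) / s : ℝ) : ℂ))
      (fun x : ℝ => (1 / (Real.Gamma (1 - α) : ℂ)) * (Complex.exp (-z * x) *
        ((∫ y in (0:ℝ)..x, (x - y) ^ (-α) * (a * Real.exp y * f' (a * Real.exp y)) : ℝ) : ℂ)))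
      (Set.Ioi 0) := by
    intro x hx
    simp only
    rw [aux_inner a ha α f' x hx, Complex.ofReal_mul, Complex.ofReal_div, Complex.ofReal_one]
    ring
  have i3 := (i1.congr_fun hcongr measurableSet_Ioi).const_mul (Real.Gamma (1 - α) : ℂ)
  simp only [← mul_assoc, mul_one_div_cancel hΓ, one_mul] at i3
  rw [o1.2, o2.2, setIntegral_congr_fun measurableSet_Ioi hcongr, integral_const_mul]
  have hc := aux_core α hα1 (fun x => f (a * Real.exp x))
    (fun y => a * Real.exp y * f' (a * Real.exp y)) ?_ ?_ z hz ?_ i2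
  · rw [hc, ← mul_assoc, one_div, inv_mul_cancel₀ hΓ]
    simp
  · intro x hx
    have h1 : a ≤ a * Real.exp x := by
      have := Real.one_le_exp hx
      nlinarith
    have := (hderiv _ h1).comp x (aux_deriv a x)
    rw [mul_comm]
    exact this
  · fun_prop
  · simpa only [mul_assoc] using! i3
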